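/- For colors a_1,…,a_k ∈ A, the colored immaculate function indexed by the sentence of single-letter words (a_1,…,a_k) satisfies 𝔖_{(a_1,…,a_k)} = R_{(a_1,…,a_k)} = Σ_{(a_1,…,a_k) ⪯ J} (−1)^{k−ℓ(J)} H_J, the sum running over all coarsenings J of (a_1,…,a_k). -/

import Mathlib

open scoped BigOperators

namespace ColoredImm

variable {A : Type*}

/-- A *weak sentence* over the alphabet `A`: a finite list of words (words may be empty). -/
abbrev Sentence (A : Type*) := List (List A)

/-- A genuine *sentence*: all of its words are nonempty. -/
def IsSentence (I : Sentence A) : Prop := ∀ w ∈ I, w ≠ []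

/-- The size `|I|` of a sentence: its total number of letters. -/
def size (I : Sentence A) : ℕ := (I.map List.length).sum

/-- The word lengths `wℓ(I)` of a sentence. -/
def wl (I : Sentence A) : List ℕ := I.map List.length

/-- The flattening of a weak sentence: delete all empty words. -/
def flattenWS (I : Sentence A) : Sentence A := I.filter (fun w => !w.isEmpty)

/-- `Refines J I` means `J ⪯ I`: the sentence `I` can be obtained by concatenating
some adjacent words of `J` (so `J` is a refinement of `I`, and `I` a coarsening of `J`). -/
def Refines (J I : Sentence A) : Prop :=
  ∃ P : List (Sentence A), (∀ p ∈ P, p ≠ []) ∧ P.flatten = J ∧ P.map List.flatten = I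

/-! ### Fillings and colored immaculate tableaux -/

/-- An integer filling of a diagram, recorded row by row. -/
abbrev Filling := List (List ℕ)

/-- The entry of a filling at box `b = (row, column)` (0-indexed), with default `0`. -/
def entryAt (f : Filling) (b : ℕ × ℕ) : ℕ := (f.getD b.1 []).getD b.2 0

/-- `IsCIT I f`: `f` is a colored immaculate tableau of shape `I`; that is, `f` has the
same shape as the colored composition diagram of `I`, its entries are positive integers
weakly increasing left to right along each row, and the entries in the first column are
strictly increasing from top to bottom. -/
def IsCIT (I : Sentence A) (f : Filling) : Prop :=
  f.map List.length = I.map List.length ∧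
  (∀ row ∈ f, row.Chain' (· ≤ ·)) ∧
  (f.filterMap List.head?).Chain' (· < ·) ∧
  (∀ x ∈ f.flatten, 1 ≤ x)

/-- The colors (letters of `w`) of the boxes of one row whose entry (in `row`) is `v`,
read from left to right. -/
def rowWith (w : List A) (row : List ℕ) (v : ℕ) : List A :=
  ((w.zip row).filter (fun p => p.2 == v)).map Prod.fst

/-- The word of the type of a tableau at value `v`: the colors of all boxes with entry `v`,
read left to right, from the bottom row up to the top row. -/
def typeWord (I : Sentence A) (f : Filling) (v : ℕ) : List A :=
  (((I.zip f).reverse).map (fun p => rowWith p.1 p.2 v)).flatten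

/-- `HasType I f B` : the tableau `f` (of shape `I`) has type the weak sentence `B`,
i.e. for every positive integer `v`, the colors of the boxes of `f` containing `v`
(read left to right, bottom to top) form the `v`-th word of `B`. -/
def HasType (I : Sentence A) (f : Filling) (B : Sentence A) : Prop :=
  ∀ v, 1 ≤ v → typeWord I f v = B.getD (v - 1) []

/-- `K_{J,B}`: the number of colored immaculate tableaux of shape `J` and type `B`. -/
noncomputable def KJB (J B : Sentence A) : ℕ :=
  Set.ncard {f : Filling | IsCIT J f ∧ HasType J f B}

/-! ### Standardization -/

/-- The list of boxes of a filling. -/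
def boxes (f : Filling) : List (ℕ × ℕ) :=
  ((List.range f.length).map
    (fun r => (List.range (f.getD r []).length).map (fun j => (r, j)))).flatten

/-- `beforeB f b b'`: box `b` comes strictly before box `b'` in the type-reading order of `f`
(smaller entries first; among equal entries, lower rows first, and within a row left to right). -/
def beforeB (f : Filling) (b b' : ℕ × ℕ) : Bool :=
  entryAt f b < entryAt f b' ||
    (entryAt f b == entryAt f b' && (b'.1 < b.1 || (b.1 == b'.1 && b.2 < b'.2)))

/-- The standardization of a filling: each box is renumbered (starting from `1`)
according to its position in the type-reading order. -/
def stdFill (f : Filling) : Filling :=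
  (List.range f.length).map (fun r =>
    (List.range (f.getD r []).length).map (fun j =>
      1 + ((boxes f).filter (fun b' => beforeB f b' (r, j))).length))

/-- The number of boxes of a filling. -/
def nBoxes (f : Filling) : ℕ := f.flatten.length

/-- A filling of `n` boxes is standard when its entries are exactly `1, …, n`,
each appearing once. -/
def IsStandardF (f : Filling) : Prop := f.flatten.Perm (List.range' 1 (nBoxes f))

/-! ### Descents and the colored descent composition -/

/-- The (0-indexed) row containing the value `v` in a standard filling. -/
def rowOf (f : Filling) (v : ℕ) : ℕ := f.findIdx (fun row => row.contains v)

/-- The sorted list of descents of a standard filling: those `i` with `1 ≤ i ≤ n-1`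
such that `i+1` lies in a strictly lower row than `i`. -/
def descList (f : Filling) : List ℕ :=
  (List.range' 1 (nBoxes f - 1)).filter (fun i => decide (rowOf f i < rowOf f (i + 1)))

/-- The composition of `n` associated to a set of split positions `d_1 < … < d_k`:
`(d_1, d_2 - d_1, …, n - d_k)`. -/
def compOf (ds : List ℕ) (n : ℕ) : List ℕ :=
  List.zipWith (fun a b => b - a) (0 :: ds) (ds ++ [n])

/-- Split a word into a sentence according to a composition. -/
def splitByComp : List A → List ℕ → List (List A)
  | _, [] => []
  | w, a :: rest => w.take a :: splitByComp (w.drop a) rest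

/-- The color of the box containing the value `v` in a standard filling of shape `I`. -/
def colorOf [Inhabited A] (I : Sentence A) (f : Filling) (v : ℕ) : A :=
  (I.getD (rowOf f v) []).getD ((f.getD (rowOf f v) []).findIdx (fun x => x == v)) default

/-- The maximal word of the colored descent composition of a standard filling of shape `I`:
the colors of its boxes read in the order of their integer entries. -/
def readWord [Inhabited A] (I : Sentence A) (f : Filling) : List A :=
  (List.range (nBoxes f)).map (fun i => colorOf I f (i + 1))

/-- The colored descent composition `co_A(U)` of a standard colored immaculate tableau:
read the colors of the boxes in the order of their entries, starting a new word
immediately after each descent. -/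
def coA [Inhabited A] (I : Sentence A) (f : Filling) : Sentence A :=
  if nBoxes f = 0 then [] else splitByComp (readWord I f) (compOf (descList f) (nBoxes f))

/-- `L_{J,C}`: the number of standard colored immaculate tableaux of shape `J`
with colored descent composition `C`. -/
noncomputable def LJC [Inhabited A] (J C : Sentence A) : ℕ :=
  Set.ncard {f : Filling | IsCIT J f ∧ IsStandardF f ∧ coA J f = C}

/-! ### The colored quasisymmetric functions `QSym_A` -/

/-- A (normal form of a) monomial in the partially commutative variables `x_{a,i}`:
a pair consisting of the list of words `(w_1, …, w_m)` and the list of (strictly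
increasing, positive) second indices `(j_1 < … < j_m)`, representing
`x_{w_1,j_1} ⋯ x_{w_m,j_m}`. -/
abbrev Mono (A : Type*) := List (List A) × List ℕ

/-- A colored quasisymmetric "series": a formal linear combination of monomials,
recorded by its coefficient function.  `QSym_A` itself is the span of the colored
monomial functions `MQ I` inside this space. -/
abbrev QSymA (A : Type*) := Mono A → ℚ

/-- Validity of a monomial normal form: words and indices match up, the indices are
strictly increasing positive integers, and all words are nonempty. -/
def ValidMono (m : Mono A) : Prop :=
  m.1.length = m.2.length ∧ m.2.Chain' (· < ·) ∧ (∀ j ∈ m.2, 1 ≤ j) ∧ ∀ w ∈ m.1, w ≠ []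

open Classical in
/-- The colored monomial quasisymmetric function `M_I`: the sum of all monomials
`x_{w_1,j_1} ⋯ x_{w_m,j_m}` with `j_1 < … < j_m`, where `I = (w_1, …, w_m)`. -/
noncomputable def MQ (I : Sentence A) : QSymA A := fun m =>
  if m.1 = I ∧ ValidMono m then 1 else 0

/-- The largest entry of a filling. -/
def maxEntry (f : Filling) : ℕ := f.flatten.foldr max 0

/-- The monomial `x_T` of a colored immaculate tableau `T = f` of shape `I`:
for `T` of type `B = (u_1, …, u_j)` it is `x_{u_1,1} x_{u_2,2} ⋯ x_{u_j,j}`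
(empty words are skipped). -/
def monoOf (I : Sentence A) (f : Filling) : Mono A :=
  let vs := ((List.range (maxEntry f)).map (· + 1)).filter (fun v => !(typeWord I f v).isEmpty)
  (vs.map (typeWord I f), vs)

/-- The colored dual immaculate function `𝔖*_J = Σ_T x_T`, the sum of the monomials of all
colored immaculate tableaux `T` of shape `J` (its coefficient at a monomial `m` is the
number of such tableaux with `x_T = m`). -/
noncomputable def dualImm (J : Sentence A) : QSymA A := fun m =>
  (Set.ncard {f : Filling | IsCIT J f ∧ monoOf J f = m} : ℚ)

/-- The colored fundamental quasisymmetric function `F_I = Σ_{J ⪯ I} M_J`. -/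
noncomputable def FQ (I : Sentence A) : QSymA A :=
  ∑ᶠ J ∈ {J : Sentence A | Refines J I}, MQ J

/-! ### The colored immaculate descent graph -/

/-- Edges of the colored immaculate descent graph: a directed edge from `I` to `J` (`J ≠ I`)
whenever some standard colored immaculate tableau of shape `I` has colored descent
composition `J`. -/
def IsEdge [Inhabited A] (I J : Sentence A) : Prop := J ≠ I ∧ LJC I J ≠ 0

/-- Directed paths from `I` to `K` in the colored immaculate descent graph, recorded by
their (nonempty) lists of successive vertices; the path `[I]` is the empty path at `I`. -/
def PathsFromTo [Inhabited A] (I K : Sentence A) : Set (List (Sentence A)) :=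
  {p | p.head? = some I ∧ p.getLast? = some K ∧ p.Chain' IsEdge}

/-- The signed weight `(-1)^{ℓ(𝒫)} prod(𝒫)` of a directed path `𝒫`:
`ℓ(𝒫)` is its number of edges and `prod(𝒫)` the product of its edge weights `L_{I,J}`. -/
noncomputable def pathWeight [Inhabited A] (p : List (Sentence A)) : ℚ :=
  ((-1 : ℚ)) ^ (p.length - 1) * ((p.zip p.tail).map (fun e => (LJC e.1 e.2 : ℚ))).prod

/-- `L⁻¹_{I,K} = Σ_𝒫 (-1)^{ℓ(𝒫)} prod(𝒫)`, summed over all directed paths `𝒫`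
from `I` to `K` in the colored immaculate descent graph. -/
noncomputable def Linv [Inhabited A] (I K : Sentence A) : ℚ :=
  ∑ᶠ p ∈ PathsFromTo I K, pathWeight p

/-! ### The colored noncommutative symmetric functions `NSym_A` -/

/-- A formal series over the complete homogeneous basis `{H_I}` of `NSym_A`, recorded by its
coefficient function on (weak) sentences.  `NSym_A` itself consists of the finitely
supported elements supported on genuine sentences; see `InNSym`. -/
abbrev NSymA (A : Type*) := Sentence A → ℚ

/-- Membership in `NSym_A` proper: finitely supported, and supported on genuine sentences. -/
def InNSym (f : NSymA A) : Prop :=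
  (Function.support f).Finite ∧ ∀ I, f I ≠ 0 → IsSentence I

open Classical in
/-- The colored complete homogeneous noncommutative symmetric function
`H_I = H_{w_1} ⋯ H_{w_k}`. -/
noncomputable def Hd (I : Sentence A) : NSymA A := fun J => if J = I then 1 else 0

/-- `H_w` for a single word `w`, with `H_∅ = 1`. -/
noncomputable def Hw (w : List A) : NSymA A := if w.isEmpty then Hd [] else Hd [w]

/-- Multiplication in `NSym_A` (the concatenation product, extended to series):
`H_I · H_J = H_{I ⬝ J}`. -/
def mulN (f g : NSymA A) : NSymA A := fun I =>
  ∑ j ∈ Finset.range (I.length + 1), f (I.take j) * g (I.drop j)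

/-- The duality pairing `⟨·,·⟩ : NSym_A × QSym_A → ℚ`, determined by
`⟨H_I, M_J⟩ = δ_{I,J}`: the `M_I`-coefficient of a quasisymmetric function is its
coefficient on the monomial `x_{w_1,1} x_{w_2,2} ⋯ x_{w_k,k}`. -/
noncomputable def pairNQ (G : NSymA A) (F : QSymA A) : ℚ :=
  ∑ᶠ I ∈ {I : Sentence A | IsSentence I}, G I * F (I, List.range' 1 I.length)

/-- All ways of splitting each word of a list of words into a prefix and a suffix. -/
def splitsOf : List (List A) → List (List (List A) × List (List A))
  | [] => [([], [])]
  | w :: ws =>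
      (((splitsOf ws).map (fun p =>
        (List.range (w.length + 1)).map (fun t => (w.take t :: p.1, w.drop t :: p.2))))).flatten

/-- Restriction of a candidate monomial: keep only the nonempty words together with
their indices. -/
def restrictMono (ws : List (List A)) (js : List ℕ) : Mono A :=
  let ps := (ws.zip js).filter (fun p => !p.1.isEmpty)
  (ps.map Prod.fst, ps.map Prod.snd)

/-- The product of colored quasisymmetric series: the coefficient of a monomial in `F·G`
is the sum, over all ways of writing each of its words as a concatenation of a word of a
monomial of `F` (on the left) and a word of a monomial of `G` (on the right), of the
products of the corresponding coefficients. -/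
def mulQ (F G : QSymA A) : QSymA A := fun m =>
  ((splitsOf m.1).map (fun p => F (restrictMono p.1 m.2) * G (restrictMono p.2 m.2))).sum

/-- The right perp operator `M^⊸` of `M ∈ QSym_A`, the linear operator on `NSym_A`
determined by `⟨M^⊸(H), G⟩ = ⟨H, G·M⟩`; explicitly, for the dual bases `{M_I}` and `{H_I}`,
`M^⊸(H) = Σ_I ⟨H, M_I · M⟩ H_I`. -/
noncomputable def rperp (M : QSymA A) (H : NSymA A) : NSymA A :=
  ∑ᶠ I ∈ {I : Sentence A | IsSentence I}, pairNQ H (mulQ (MQ I) M) • Hd I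

/-- The colored noncommutative Bernstein operator
`𝔹_v = Σ_u Σ_{Q : w(Q^r) = u} (-1)^{ℓ(Q)} H_{v·u} · (Σ_{S ⪰ Q} M_S^⊸)`,
where `Q` runs over all sentences, `u = w(Q^r)` is the concatenation of the words of `Q`
in reverse order, and `S` runs over all coarsenings of `Q`. -/
noncomputable def Bern (v : List A) (f : NSymA A) : NSymA A :=
  ∑ᶠ Q ∈ {Q : Sentence A | IsSentence Q},
    ((-1 : ℚ)) ^ Q.length •
      mulN (Hw (v ++ Q.reverse.flatten))
        (∑ᶠ S ∈ {S : Sentence A | Refines Q S}, rperp (MQ S) f)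

/-- The colored immaculate function `𝔖_J = 𝔹_{v_1} 𝔹_{v_2} ⋯ 𝔹_{v_h}(1)`. -/
noncomputable def ImmS (J : Sentence A) : NSymA A := J.foldr Bern (Hd [])

/-- The colored ribbon function `R_I = Σ_{J ⪰ I} (-1)^{ℓ(J) - ℓ(I)} H_J`. -/
noncomputable def Rib (I : Sentence A) : NSymA A :=
  ∑ᶠ J ∈ {J : Sentence A | Refines I J}, ((-1 : ℚ)) ^ (I.length - J.length) • Hd J

/-- The Pieri relation `J ⊂_w K` for a sentence `J = (v_1, …, v_h)` and a word `w`: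
`K = (u_1, …, u_g)` with `h ≤ g ≤ h+1` (setting `v_{h+1} = ∅`) and `u_j = v_j · q_j`
for words `q_j` (possibly empty) whose reversed concatenation `q_g ⋯ q_1` equals `w`. -/
def PieriRel (J : Sentence A) (w : List A) (K : Sentence A) : Prop :=
  J.length ≤ K.length ∧ K.length ≤ J.length + 1 ∧
  ∃ q : List (List A), q.length = K.length ∧ q.reverse.flatten = w ∧
    ∀ j < K.length, K.getD j [] = J.getD j [] ++ q.getD j []

/-- Right containment of a weak sentence `K` in `J`: same length, and each word of `K` is a
suffix of the corresponding word of `J`. -/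
def RightContained (K J : Sentence A) : Prop :=
  K.length = J.length ∧ ∀ i < J.length, (K.getD i []).IsSuffix (J.getD i [])

/-- The weak sentence `J/_R K`: remove each word of `K` from the right end of the
corresponding word of `J`. -/
def rightQuot (J K : Sentence A) : Sentence A :=
  List.zipWith (fun v u => v.take (v.length - u.length)) J K

/-- Left containment `J ⊆_L I`: `ℓ(J) ≤ ℓ(I)` and each word of `J` is a prefix of the
corresponding word of `I`. -/
def LeftContained (J I : Sentence A) : Prop :=
  J.length ≤ I.length ∧ ∀ i < J.length, (J.getD i []).IsPrefix (I.getD i [])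

/-- A skew colored immaculate tableau of shape `I/J`: a filling of the active boxes
(the `i`-th row keeps the last `|w_i| - |v_i|` boxes) with positive integers, rows weakly
increasing left to right, and the entries in the (active part of the) first column of `I`
strictly increasing top to bottom. -/
def IsSkewCIT (I J : Sentence A) (f : Filling) : Prop :=
  f.map List.length =
    (List.range I.length).map (fun i => (I.getD i []).length - (J.getD i []).length) ∧
  (∀ row ∈ f, row.Chain' (· ≤ ·)) ∧
  ((List.range I.length).filterMap
    (fun i => if (J.getD i []).length = 0 then (f.getD i []).head? else none)).Chain' (· < ·) ∧
  (∀ x ∈ f.flatten, 1 ≤ x)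

/-- The word of the type of a skew tableau at value `v`: the colors of the active boxes with
entry `v`, read left to right, bottom to top. -/
def skewTypeWord (I J : Sentence A) (f : Filling) (v : ℕ) : List A :=
  (((List.range I.length).reverse).map (fun i =>
    rowWith ((I.getD i []).drop (J.getD i []).length) (f.getD i []) v)).flatten

/-- `SkewHasType I J f K` : the skew tableau `f` of shape `I/J` has type `K`. -/
def SkewHasType (I J : Sentence A) (f : Filling) (K : Sentence A) : Prop :=
  ∀ v, 1 ≤ v → skewTypeWord I J f v = K.getD (v - 1) []

/-! ### The complement involution `ψ` and the row-strict functions -/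

/-- The complement `I^c` of a sentence: the unique sentence with the same maximal word
that splits exactly where `I` does not. -/
def complSent (I : Sentence A) : Sentence A :=
  let w := I.flatten
  let n := w.length
  if n = 0 then []
  else
    let splits := (((wl I).scanl (· + ·) 0).drop 1).dropLast
    let csplits := (List.range' 1 (n - 1)).filter (fun i => !(splits.contains i))
    splitByComp w (compOf csplits n)

/-- The `M_I`-coefficient of a colored quasisymmetric function. -/
noncomputable def coeffM (G : QSymA A) (I : Sentence A) : ℚ := G (I, List.range' 1 I.length)

/-- The image of `M_I` under `ψ`, via `M_I = Σ_{J ⪯ I} (-1)^{ℓ(J)-ℓ(I)} F_J` and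
`ψ(F_J) = F_{J^c}`. -/
noncomputable def psiM (I : Sentence A) : QSymA A :=
  ∑ᶠ J ∈ {J : Sentence A | Refines J I}, ((-1 : ℚ)) ^ (J.length - I.length) • FQ (complSent J)

/-- The linear involution `ψ` of `QSym_A`, determined by `ψ(F_I) = F_{I^c}`. -/
noncomputable def psiQ (G : QSymA A) : QSymA A :=
  ∑ᶠ I ∈ {I : Sentence A | IsSentence I}, coeffM G I • psiM I

/-- A colored row-strict immaculate tableau of shape `I`: entries strictly increase left to
right along each row and weakly increase top to bottom down the first column. -/
def IsCRSIT (I : Sentence A) (f : Filling) : Prop :=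
  f.map List.length = I.map List.length ∧
  (∀ row ∈ f, row.Chain' (· < ·)) ∧
  (f.filterMap List.head?).Chain' (· ≤ ·) ∧
  (∀ x ∈ f.flatten, 1 ≤ x)

/-- The word of the type of a row-strict tableau at value `v`: the colors of the boxes with
entry `v`, read left to right, top to bottom. -/
def rsTypeWord (I : Sentence A) (f : Filling) (v : ℕ) : List A :=
  ((I.zip f).map (fun p => rowWith p.1 p.2 v)).flatten

/-- The monomial `x_T` of a colored row-strict immaculate tableau. -/
def rsMonoOf (I : Sentence A) (f : Filling) : Mono A :=
  let vs := ((List.range (maxEntry f)).map (· + 1)).filter (fun v => !(rsTypeWord I f v).isEmpty)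
  (vs.map (rsTypeWord I f), vs)

/-- The colored row-strict dual immaculate function `ℛ𝔖*_J = Σ_T x_T`, summed over all
colored row-strict immaculate tableaux `T` of shape `J`. -/
noncomputable def rsDualImm (J : Sentence A) : QSymA A := fun m =>
  (Set.ncard {f : Filling | IsCRSIT J f ∧ rsMonoOf J f = m} : ℚ)

/-- `α ⪰ β` in the reverse lexicographic order on compositions: at the first index where
they differ, `α` has the *smaller* entry (padding with zeros). -/
def RevLexGE (α β : List ℕ) : Prop :=
  α = β ∨ ∃ i, (∀ j < i, α.getD j 0 = β.getD j 0) ∧ α.getD i 0 < β.getD i 0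

/-! ### Uncolored (ordinary) versions, for `QSym` -/

namespace Uncolored

/-- A composition: a list of positive integers. -/
def IsComposition (α : List ℕ) : Prop := ∀ a ∈ α, 1 ≤ a

/-- `β ⪯ α`: the composition `α` is obtained by summing adjacent parts of `β`. -/
def RefinesC (β α : List ℕ) : Prop :=
  ∃ P : List (List ℕ), (∀ p ∈ P, p ≠ []) ∧ P.flatten = β ∧ P.map List.sum = α

/-- A monomial `x_{i_1}^{a_1} ⋯ x_{i_m}^{a_m}` recorded by its exponents and its
strictly increasing positive indices. -/
abbrev MonoU := List ℕ × List ℕ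

/-- A quasisymmetric "series", recorded by its coefficient function on monomials.
`QSym` is the span of the monomial functions `MU α` inside this space. -/
abbrev QSymU := MonoU → ℚ

/-- Validity of a monomial: matching lengths, strictly increasing positive indices,
positive exponents. -/
def ValidMonoU (m : MonoU) : Prop :=
  m.1.length = m.2.length ∧ m.2.Chain' (· < ·) ∧ (∀ j ∈ m.2, 1 ≤ j) ∧ ∀ a ∈ m.1, 1 ≤ a

open Classical in
/-- The monomial quasisymmetric function `M_α`. -/
noncomputable def MU (α : List ℕ) : QSymU := fun m =>
  if m.1 = α ∧ ValidMonoU m then 1 else 0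

/-- The fundamental quasisymmetric function `F_α = Σ_{β ⪯ α} M_β`. -/
noncomputable def FU (α : List ℕ) : QSymU :=
  ∑ᶠ β ∈ {β : List ℕ | RefinesC β α}, MU β

/-- An immaculate tableau of shape `α`: positive integer entries, rows weakly increasing
left to right, first column strictly increasing top to bottom. -/
def IsIT (α : List ℕ) (f : Filling) : Prop :=
  f.map List.length = α ∧
  (∀ row ∈ f, row.Chain' (· ≤ ·)) ∧
  (f.filterMap List.head?).Chain' (· < ·) ∧
  (∀ x ∈ f.flatten, 1 ≤ x)

/-- The number of boxes of `f` with entry `v`. -/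
def countOf (f : Filling) (v : ℕ) : ℕ := (f.flatten.filter (fun x => x == v)).length

/-- The monomial `x^T` of an immaculate tableau `T` of type `β`:
`x_1^{β_1} ⋯ x_h^{β_h}` (zero exponents skipped). -/
def monoOfU (f : Filling) : MonoU :=
  let vs := ((List.range (maxEntry f)).map (· + 1)).filter (fun v => decide (countOf f v ≠ 0))
  (vs.map (countOf f), vs)

/-- The dual immaculate function `𝔖*_α = Σ_T x^T`, summed over all immaculate tableaux
of shape `α`. -/
noncomputable def dualImmU (α : List ℕ) : QSymU := fun m =>
  (Set.ncard {f : Filling | IsIT α f ∧ monoOfU f = m} : ℚ)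

/-- The descent composition `co(U)` of a standard immaculate tableau. -/
def descComp (f : Filling) : List ℕ :=
  if nBoxes f = 0 then [] else compOf (descList f) (nBoxes f)

/-- `L_{α,β}`: the number of standard immaculate tableaux of shape `α` with descent
composition `β`. -/
noncomputable def LU (α β : List ℕ) : ℕ :=
  Set.ncard {f : Filling | IsIT α f ∧ IsStandardF f ∧ descComp f = β}

/-- Edges of the immaculate descent graph `𝔇^n`. -/
def IsEdgeU (α β : List ℕ) : Prop := β ≠ α ∧ LU α β ≠ 0

/-- Directed paths from `α` to `β` in the immaculate descent graph, recorded by their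
lists of successive vertices; `[α]` is the empty path at `α`. -/
def PathsU (α β : List ℕ) : Set (List (List ℕ)) :=
  {p | p.head? = some α ∧ p.getLast? = some β ∧ p.Chain' IsEdgeU}

/-- The signed weight `(-1)^{ℓ(𝒫)} prod(𝒫)` of a path. -/
noncomputable def pathWeightU (p : List (List ℕ)) : ℚ :=
  ((-1 : ℚ)) ^ (p.length - 1) * ((p.zip p.tail).map (fun e => (LU e.1 e.2 : ℚ))).prod

/-- `L⁻¹_{α,β} = Σ_𝒫 (-1)^{ℓ(𝒫)} prod(𝒫)`, over directed paths from `α` to `β` in `𝔇^n`. -/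
noncomputable def LinvU (α β : List ℕ) : ℚ :=
  ∑ᶠ p ∈ PathsU α β, pathWeightU p

end Uncolored

end ColoredImm

namespace ColoredImm

/-!
Write `E_u` for the ribbon function of the single letters of the word `u`; its coefficients on
sentences `K` with maximal word `u` are the signs `(-1)^(|u| - ℓ(K))`, products over the words of
`K` of a sign `φ` with `φ(p s) = -φ(p) φ(s)`. In the quasi-shuffle product `M_I M_S` this rule makes
overlaps cancel shuffles, so that `M_S^⊸ E_u` is a signed `E_r` if `u` is the maximal word of `S`
followed by `r`, and `0` otherwise. The same rule makes `Σ_{S ⪰ Q} sgn(S)` vanish as soon as `Q` has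
two words. Only `Q = ∅` and one-word `Q` contribute to the Bernstein operator, which leaves
`𝔹_v E_u = Σ_j (-1)^j H_{v u_1 ⋯ u_j} E_{u_{j+1} ⋯ u_k}`. Iterating the product rule
`R_{(v, w, …)} = H_v R_{(w, …)} - R_{(v w, …)}` identifies this sum with `R_{(v, u_1, …, u_k)}`.
-/

section

variable {A : Type*}

section Sentences

theorem isSentence_cons {w : List A} {K : Sentence A} :
    IsSentence (w :: K) ↔ w ≠ [] ∧ IsSentence K :=
  List.forall_mem_cons

theorem flattenWS_cons_of_ne_nil {w : List A} (hw : w ≠ []) (K : Sentence A) :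
    flattenWS (w :: K) = w :: flattenWS K := by
  simp [flattenWS, hw]

theorem isSentence_flattenWS (K : Sentence A) : IsSentence (flattenWS K) := by
  intro w hw
  simpa using List.of_mem_filter hw

theorem flatten_flattenWS (K : Sentence A) : (flattenWS K).flatten = K.flatten := by
  rw [flattenWS, List.flatten_filter_not_isEmpty]

theorem flattenWS_cons_eq_nil_iff {w : List A} {K : Sentence A} :
    flattenWS (w :: K) = [] ↔ w = [] ∧ flattenWS K = [] := by
  simp [flattenWS]

theorem flattenWS_cons_eq_cons_iff {x p : List A} (hp : p ≠ []) (K I : Sentence A) :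
    flattenWS (x :: K) = p :: I ↔
      x = [] ∧ flattenWS K = p :: I ∨ x = p ∧ flattenWS K = I := by
  by_cases hx : x = []
  · simp [hx, flattenWS, hp.symm]
  · simp [flattenWS_cons_of_ne_nil hx, hx]

theorem IsSentence.length_le_length_flatten {K : Sentence A} (hK : IsSentence K) :
    K.length ≤ K.flatten.length := by
  rw [List.length_flatten, ← List.length_map (as := K) List.length]
  refine List.length_le_sum_of_one_le _ fun n hn => ?_
  obtain ⟨w, hw, rfl⟩ := List.mem_map.1 hn
  exact List.length_pos_iff.2 (hK w hw)

theorem flatten_map_singleton (u : List A) : (u.map (fun a => [a])).flatten = u := by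
  induction u with
  | nil => rfl
  | cons a u ih => rw [List.map_cons, List.flatten_cons, ih, List.singleton_append]

end Sentences

section Coarsenings

theorem refines_nil_iff {S : Sentence A} : Refines [] S ↔ S = [] := by
  constructor
  · rintro ⟨P, hP, hflat, rfl⟩
    have hnil : P = [] := List.eq_nil_iff_forall_not_mem.2 fun p hp =>
      hP p hp (List.flatten_eq_nil_iff.1 hflat p hp)
    rw [hnil, List.map_nil]
  · rintro rfl
    exact ⟨[], by simp, rfl, rfl⟩

theorem refines_cons_iff {q : List A} {Q S : Sentence A} :
    Refines (q :: Q) S ↔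
      ∃ Q₁ Q₂ T, Q = Q₁ ++ Q₂ ∧ Refines Q₂ T ∧ S = (q ++ Q₁.flatten) :: T := by
  constructor
  · rintro ⟨_ | ⟨_ | ⟨x, p⟩, P⟩, hP, hflat, rfl⟩
    · simp at hflat
    · simp at hP
    · obtain ⟨rfl, rfl⟩ : x = q ∧ p ++ P.flatten = Q := by simpa using hflat
      exact ⟨p, P.flatten, _, rfl, ⟨P, fun r hr => hP r (by simp [hr]), rfl, rfl⟩, rfl⟩
  · rintro ⟨p, _, _, rfl, ⟨P, hP, rfl, rfl⟩, rfl⟩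
    exact ⟨(q :: p) :: P, by simpa using hP, rfl, rfl⟩

theorem refines_singleton_iff {q : List A} {S : Sentence A} : Refines [q] S ↔ S = [q] := by
  simp [refines_cons_iff, refines_nil_iff]

theorem setOf_refines_cons_cons (q q' : List A) (Q : Sentence A) :
    {S | Refines (q :: q' :: Q) S} =
      (q :: ·) '' {S | Refines (q' :: Q) S} ∪ {S | Refines ((q ++ q') :: Q) S} := by
  ext S
  simp only [Set.mem_union, Set.mem_image, Set.mem_ofPred_eq]
  rw [refines_cons_iff, refines_cons_iff]
  constructor
  · rintro ⟨_ | ⟨x, Q₁⟩, Q₂, T, hQ, hT, rfl⟩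
    · exact .inl ⟨T, by simpa [hQ] using hT, by simp⟩
    · obtain ⟨rfl, rfl⟩ : q' = x ∧ Q = Q₁ ++ Q₂ := by simpa using hQ
      exact .inr ⟨Q₁, Q₂, T, rfl, hT, by simp⟩
  · rintro (⟨T, hT, rfl⟩ | ⟨Q₁, Q₂, T, rfl, hT, rfl⟩)
    · exact ⟨[], q' :: Q, T, rfl, hT, by simp⟩
    · exact ⟨q' :: Q₁, Q₂, T, rfl, hT, by simp⟩

theorem disjoint_image_cons_setOf_refines (q : List A) {q' : List A} (hq' : q' ≠ [])
    (Q : Sentence A) (X : Set (Sentence A)) :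
    Disjoint ((q :: ·) '' X) {S | Refines ((q ++ q') :: Q) S} := by
  rw [Set.disjoint_left]
  rintro _ ⟨T, -, rfl⟩ h
  obtain ⟨Q₁, _, _, -, -, hS⟩ := refines_cons_iff.1 h
  have hnil : q' ++ Q₁.flatten = [] := by simpa using (List.cons.inj hS).1
  exact hq' (List.append_eq_nil_iff.1 hnil).1

theorem finite_setOf_refines (Q : Sentence A) : {S | Refines Q S}.Finite := by
  match Q with
  | [] => simp [refines_nil_iff]
  | [q] => simp [refines_singleton_iff]
  | q :: q' :: Q =>
    rw [setOf_refines_cons_cons]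
    exact ((finite_setOf_refines (q' :: Q)).image _).union (finite_setOf_refines ((q ++ q') :: Q))
termination_by Q.length

theorem Refines.length_le {Q S : Sentence A} (h : Refines Q S) : S.length ≤ Q.length := by
  obtain ⟨P, hP, rfl, rfl⟩ := h
  rw [List.length_map, List.length_flatten, ← List.length_map (as := P) List.length]
  refine List.length_le_sum_of_one_le _ fun n hn => ?_
  obtain ⟨p, hp, rfl⟩ := List.mem_map.1 hn
  exact List.length_pos_iff.2 (hP p hp)

theorem Refines.flatten_eq {Q S : Sentence A} (h : Refines Q S) : S.flatten = Q.flatten := by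
  obtain ⟨P, -, rfl, rfl⟩ := h
  exact List.flatten_flatten.symm

theorem Refines.isSentence {Q S : Sentence A} (h : Refines Q S) (hQ : IsSentence Q) :
    IsSentence S := by
  obtain ⟨P, hP, rfl, rfl⟩ := h
  intro w hw
  obtain ⟨p, hp, rfl⟩ := List.mem_map.1 hw
  obtain ⟨x, hx⟩ := List.exists_mem_of_ne_nil _ (hP p hp)
  exact fun hnil => hQ x (List.mem_flatten_of_mem hp hx) (List.flatten_eq_nil_iff.1 hnil x hx)

theorem refines_map_singleton_iff {u : List A} {K : Sentence A} :
    Refines (u.map (fun a => [a])) K ↔ IsSentence K ∧ K.flatten = u := by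
  constructor
  · intro h
    exact ⟨h.isSentence (by simp [IsSentence]), by rw [h.flatten_eq, flatten_map_singleton]⟩
  · rintro ⟨hK, rfl⟩
    refine ⟨K.map (List.map fun a => [a]), ?_, List.map_flatten.symm, ?_⟩
    · simpa [IsSentence] using hK
    · simp [Function.comp_def, flatten_map_singleton]

end Coarsenings

section Signs

/-- The sign `(-1)^(|w| - 1)` attached to a nonempty word, with the exponent shifted by two to
avoid subtraction. -/
def wordSign (w : List A) : ℚ := (-1) ^ (w.length + 1)

/-- The sign `(-1)^(|K| - ℓ(K))` of a sentence, as a product over its words. -/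
def sentenceSign (K : Sentence A) : ℚ := (K.map wordSign).prod

theorem wordSign_append (p s : List A) : wordSign (p ++ s) = -(wordSign p * wordSign s) := by
  simp only [wordSign, List.length_append]
  ring

theorem sentenceSign_eq_pow_add (K : Sentence A) :
    sentenceSign K = (-1) ^ (K.flatten.length + K.length) := by
  unfold sentenceSign
  induction K with
  | nil => simp
  | cons w K ih =>
    simp only [List.map_cons, List.prod_cons, ih, wordSign, List.flatten_cons,
      List.length_append, List.length_cons]
    ring

theorem IsSentence.sentenceSign_eq_pow_sub {K : Sentence A} (hK : IsSentence K) :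
    sentenceSign K = (-1) ^ (K.flatten.length - K.length) := by
  have hlen := hK.length_le_length_flatten
  rw [sentenceSign_eq_pow_add, show K.flatten.length + K.length =
    (K.flatten.length - K.length) + 2 * K.length by omega, pow_add, pow_mul]
  simp

variable {R : Type*} [Ring R] {φ : List A → R}

theorem finsum_mem_refines_prod_eq_zero (hφ : ∀ p s, φ (p ++ s) = -(φ p * φ s)) (q : List A)
    {q' : List A} {Q : Sentence A} (hQ : IsSentence (q' :: Q)) :
    ∑ᶠ S ∈ {S | Refines (q :: q' :: Q) S}, (S.map φ).prod = 0 := by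
  obtain ⟨hq', hQ'⟩ := isSentence_cons.1 hQ
  have hcons : ∑ᶠ S ∈ (q :: ·) '' {S | Refines (q' :: Q) S}, (S.map φ).prod =
      φ q * ∑ᶠ S ∈ {S | Refines (q' :: Q) S}, (S.map φ).prod := by
    rw [finsum_mem_image (List.cons_injective.injOn)]
    simp only [List.map_cons, List.prod_cons]
    exact (mul_finsum_mem' _ _ (finite_setOf_refines _)).symm
  rw [setOf_refines_cons_cons, finsum_mem_union (disjoint_image_cons_setOf_refines q hq' Q _)
    ((finite_setOf_refines _).image _) (finite_setOf_refines _), hcons]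
  match Q with
  | [] => simp [refines_singleton_iff, hφ]
  | q'' :: Q =>
    rw [finsum_mem_refines_prod_eq_zero hφ q' hQ', finsum_mem_refines_prod_eq_zero hφ (q ++ q') hQ']
    simp
termination_by Q.length

/-- The sentences occurring in the product `M_I M_S` of two colored monomial functions, with
multiplicity: the overlapping shuffles of `I` and `S`, an overlap of a word `p` of `I` and a word
`s` of `S` being `p · s`. -/
def quasiShuffle : Sentence A → Sentence A → List (Sentence A)
  | [], S => [S]
  | p :: I, [] => [p :: I]
  | p :: I, s :: S =>
      (quasiShuffle (p :: I) S).map (s :: ·) ++ (quasiShuffle I (s :: S)).map (p :: ·) ++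
        (quasiShuffle I S).map ((p ++ s) :: ·)

theorem quasiShuffle_nil_right (I : Sentence A) : quasiShuffle I [] = [I] := by
  cases I <;> simp [quasiShuffle]

theorem isSentence_of_mem_quasiShuffle {I S : Sentence A} (hI : IsSentence I) (hS : IsSentence S) :
    ∀ K ∈ quasiShuffle I S, IsSentence K := by
  fun_induction quasiShuffle I S with
  | case1 S => simpa using hS
  | case2 p I => simpa using hI
  | case3 p I s S ih₁ ih₂ ih₃ =>
    have hI' := isSentence_cons.1 hI
    have hS' := isSentence_cons.1 hS
    simp only [List.mem_append, List.mem_map]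
    rintro _ ((⟨K, hK, rfl⟩ | ⟨K, hK, rfl⟩) | ⟨K, hK, rfl⟩)
    · exact isSentence_cons.2 ⟨hS'.1, ih₁ hI hS'.2 K hK⟩
    · exact isSentence_cons.2 ⟨hI'.1, ih₂ hI'.2 hS K hK⟩
    · exact isSentence_cons.2 ⟨List.append_ne_nil_of_left_ne_nil hI'.1 s, ih₃ hI'.2 hS'.2 K hK⟩

/-- The overlap term cancels one of the two shuffle terms, leaving only the concatenation in which
`S` precedes `I`. -/
theorem sum_prod_quasiShuffle (hφ : ∀ p s, φ (p ++ s) = -(φ p * φ s)) (I S : Sentence A) :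
    ((quasiShuffle I S).map fun K => (K.map φ).prod).sum = (S.map φ).prod * (I.map φ).prod := by
  fun_induction quasiShuffle I S with
  | case1 S => simp
  | case2 p I => simp
  | case3 p I s S ih₁ ih₂ ih₃ =>
    simp only [List.map_append, List.map_map, Function.comp_def, List.map_cons, List.prod_cons,
      List.sum_append, List.sum_map_mul_left, hφ] at ih₁ ih₂ ⊢
    rw [ih₁, ih₂, ih₃]
    noncomm_ring

end Signs

section MonomialProducts

theorem length_eq_of_mem_splitsOf {K : Sentence A} {p : Sentence A × Sentence A}
    (hp : p ∈ splitsOf K) : p.1.length = K.length ∧ p.2.length = K.length := by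
  induction K generalizing p with
  | nil => simp_all [splitsOf]
  | cons w K ih =>
    simp only [splitsOf, List.mem_flatten, List.mem_map] at hp
    obtain ⟨_, ⟨p', hp', rfl⟩, hp⟩ := hp
    obtain ⟨t, -, rfl⟩ := List.mem_map.1 hp
    simp [ih hp']

theorem restrictMono_fst {ws : List (List A)} {js : List ℕ} (h : ws.length = js.length) :
    (restrictMono ws js).1 = flattenWS ws := by
  simp only [restrictMono, flattenWS]
  conv_rhs => rw [← List.map_fst_zip (l₁ := ws) (l₂ := js) h.le, List.filter_map]
  rfl

theorem restrictMono_snd_sublist {ws : List (List A)} {js : List ℕ} (h : ws.length = js.length) :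
    (restrictMono ws js).2.Sublist js := by
  have hsub := (List.filter_sublist (p := fun p : List A × ℕ => !p.1.isEmpty)
    (l := ws.zip js)).map Prod.snd
  rwa [List.map_snd_zip h.ge] at hsub

theorem validMono_restrictMono (ws : List (List A)) :
    ValidMono (restrictMono ws (List.range' 1 ws.length)) := by
  have hlen : ws.length = (List.range' 1 ws.length).length := by simp
  have hsub := restrictMono_snd_sublist hlen
  refine ⟨by simp [restrictMono], (List.Pairwise.sublist hsub List.pairwise_lt_range').isChain,
    fun j hj => (List.mem_range'_1.1 (hsub.subset hj)).1, fun w hw => ?_⟩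
  rw [restrictMono_fst hlen] at hw
  simpa using List.of_mem_filter hw

theorem flattenWS_cons_eq_nil_ite (x : List A) (K : Sentence A) :
    (if flattenWS (x :: K) = [] then 1 else 0 : ℚ) =
      if x = [] then if flattenWS K = [] then 1 else 0 else 0 := by
  rw [← ite_and]
  exact if_congr flattenWS_cons_eq_nil_iff rfl rfl

variable [DecidableEq A]

theorem flattenWS_cons_eq_cons_ite {p : List A} (hp : p ≠ []) (x : List A) (K I : Sentence A) :
    (if flattenWS (x :: K) = p :: I then 1 else 0 : ℚ) =
      (if x = [] then if flattenWS K = p :: I then 1 else 0 else 0) +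
        if x = p then if flattenWS K = I then 1 else 0 else 0 := by
  rw [if_congr (flattenWS_cons_eq_cons_iff hp K I) rfl rfl]
  by_cases hx : x = []
  · simp [hx, hp.symm]
  · simp [hx, ite_and]

theorem MQ_restrictMono (I : Sentence A) (ws : List (List A)) :
    MQ I (restrictMono ws (List.range' 1 ws.length)) = if flattenWS ws = I then 1 else 0 := by
  simp only [MQ, validMono_restrictMono, and_true, restrictMono_fst (ws := ws)
    (js := List.range' 1 ws.length) (by simp)]

/-- The number of ways to split the words of `K` into prefixes and suffixes so that, empty words
being dropped, the prefixes form `I` and the suffixes form `S`: the coefficient of `M_K` in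
`M_I M_S`. -/
def splitCount (I S K : Sentence A) : ℚ :=
  ((splitsOf K).map fun p =>
    (if flattenWS p.1 = I then 1 else 0) * (if flattenWS p.2 = S then 1 else 0)).sum

theorem mulQ_MQ_MQ (I S K : Sentence A) :
    mulQ (MQ I) (MQ S) (K, List.range' 1 K.length) = splitCount I S K := by
  refine congrArg List.sum (List.map_congr_left fun p hp => ?_)
  obtain ⟨h₁, h₂⟩ := length_eq_of_mem_splitsOf hp
  dsimp only
  rw [← MQ_restrictMono, ← MQ_restrictMono, h₁, h₂]

theorem sum_take_eq_mul_drop_eq (w p s : List A) :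
    ((List.range (w.length + 1)).map fun t =>
      ((if w.take t = p then 1 else 0) * (if w.drop t = s then 1 else 0) : ℚ)).sum =
      if w = p ++ s then 1 else 0 := by
  induction w generalizing p with
  | nil => cases p <;> simp [eq_comm]
  | cons a w ih =>
    rw [List.length_cons, List.range_succ_eq_map]
    cases p with
    | nil => simp [Function.comp_def]
    | cons b p =>
      by_cases hab : a = b
      · simpa [hab, Function.comp_def] using ih p
      · simp [hab, Function.comp_def]

theorem sum_take_drop_add_mul_add {w : List A} (hw : w ≠ []) (p s : List A) (a b c d : ℚ) :
    ((List.range (w.length + 1)).map fun t =>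
      ((if w.take t = [] then a else 0) + if w.take t = p then b else 0) *
        ((if w.drop t = [] then c else 0) + if w.drop t = s then d else 0)).sum =
      (if w = s then a * d else 0) + (if w = p then b * c else 0) +
        if w = p ++ s then b * d else 0 := by
  have hprod : ∀ (p s : List A) (x y : ℚ), ((List.range (w.length + 1)).map fun t =>
      (if w.take t = p then x else 0) * (if w.drop t = s then y else 0)).sum =
      if w = p ++ s then x * y else 0 := by
    intro p s x y
    have h := congrArg (x * y * ·) (sum_take_eq_mul_drop_eq w p s)
    simpa [← List.sum_map_mul_left, mul_comm, mul_left_comm, mul_assoc] using h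
  simp only [add_mul, mul_add, List.sum_map_add, hprod, List.nil_append, List.append_nil, hw,
    if_false]
  ring

theorem splitCount_cons (I S K : Sentence A) (w : List A) :
    splitCount I S (w :: K) = ((splitsOf K).map fun p =>
      ((List.range (w.length + 1)).map fun t =>
        ((if flattenWS (w.take t :: p.1) = I then 1 else 0) *
          (if flattenWS (w.drop t :: p.2) = S then 1 else 0) : ℚ)).sum).sum := by
  simp [splitCount, splitsOf, List.map_flatten, List.sum_flatten, Function.comp_def]

theorem splitCount_nil_nil_cons {w : List A} (hw : w ≠ []) (K : Sentence A) :
    splitCount [] [] (w :: K) = 0 := by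
  simp only [splitCount_cons, flattenWS_cons_eq_nil_ite]
  have h := sum_take_drop_add_mul_add hw [] [] (b := 0) (d := 0)
  simp only [ite_self, add_zero, mul_zero, zero_mul] at h
  simp only [h, List.map_const', List.sum_replicate, smul_zero]

theorem splitCount_nil_cons_cons {w s : List A} (hw : w ≠ []) (hs : s ≠ []) (S K : Sentence A) :
    splitCount [] (s :: S) (w :: K) = if w = s then splitCount [] S K else 0 := by
  have h := sum_take_drop_add_mul_add hw [] s (b := 0)
  simp only [ite_self, add_zero, zero_mul] at h
  simp only [splitCount_cons, flattenWS_cons_eq_nil_ite, flattenWS_cons_eq_cons_ite hs, h]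
  split_ifs <;> simp [splitCount]

theorem splitCount_cons_nil_cons {w p : List A} (hw : w ≠ []) (hp : p ≠ []) (I K : Sentence A) :
    splitCount (p :: I) [] (w :: K) = if w = p then splitCount I [] K else 0 := by
  have h := sum_take_drop_add_mul_add hw p [] (d := 0)
  simp only [ite_self, add_zero, mul_zero, zero_add] at h
  simp only [splitCount_cons, flattenWS_cons_eq_nil_ite, flattenWS_cons_eq_cons_ite hp, h]
  split_ifs <;> simp [splitCount]

theorem splitCount_cons_cons_cons {w p s : List A} (hw : w ≠ []) (hp : p ≠ []) (hs : s ≠ [])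
    (I S K : Sentence A) :
    splitCount (p :: I) (s :: S) (w :: K) =
      (if w = s then splitCount (p :: I) S K else 0) +
        (if w = p then splitCount I (s :: S) K else 0) +
        (if w = p ++ s then splitCount I S K else 0) := by
  simp only [splitCount_cons, flattenWS_cons_eq_cons_ite hp, flattenWS_cons_eq_cons_ite hs,
    sum_take_drop_add_mul_add hw, List.sum_map_add]
  congr 2 <;> split_ifs <;> simp [splitCount]

theorem count_cons_map_cons (w x : List A) (K : Sentence A) (L : List (Sentence A)) :
    (L.map (x :: ·)).count (w :: K) = if w = x then L.count K else 0 := by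
  split_ifs with h
  · subst h
    exact List.count_map_of_injective L _ List.cons_injective K
  · exact List.count_eq_zero.2 (by simp [Ne.symm h])

theorem splitCount_eq_count_quasiShuffle {I S K : Sentence A} (hI : IsSentence I)
    (hS : IsSentence S) (hK : IsSentence K) :
    splitCount I S K = (quasiShuffle I S).count K := by
  induction K generalizing I S with
  | nil =>
    have hcount (x : List A) (L : List (Sentence A)) : (L.map (x :: ·)).count [] = 0 :=
      List.count_eq_zero.2 (by simp)
    cases I <;> cases S <;> simp [splitCount, splitsOf, flattenWS, quasiShuffle, hcount]
  | cons w K ih =>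
    obtain ⟨hw, hK⟩ := isSentence_cons.1 hK
    cases I with
    | nil =>
      cases S with
      | nil => simp [splitCount_nil_nil_cons hw, quasiShuffle]
      | cons s S =>
        obtain ⟨hs, hS'⟩ := isSentence_cons.1 hS
        rw [splitCount_nil_cons_cons hw hs, ih hI hS' hK]
        simp only [quasiShuffle]
        rw [← List.map_singleton (f := (s :: ·)), count_cons_map_cons]
        split_ifs <;> simp
    | cons p I =>
      obtain ⟨hp, hI'⟩ := isSentence_cons.1 hI
      cases S with
      | nil =>
        rw [splitCount_cons_nil_cons hw hp, ih hI' hS hK, quasiShuffle_nil_right,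
          quasiShuffle_nil_right]
        rw [← List.map_singleton (f := (p :: ·)), count_cons_map_cons]
        split_ifs <;> simp
      | cons s S =>
        obtain ⟨hs, hS'⟩ := isSentence_cons.1 hS
        rw [splitCount_cons_cons_cons hw hp hs, ih hI hS' hK, ih hI' hS hK, ih hI' hS' hK]
        simp only [quasiShuffle, List.count_append, count_cons_map_cons]
        push_cast
        rfl

end MonomialProducts

theorem pairNQ_mulQ_MQ_MQ (G : NSymA A) {I S : Sentence A} (hI : IsSentence I)
    (hS : IsSentence S) :
    pairNQ G (mulQ (MQ I) (MQ S)) = ((quasiShuffle I S).map G).sum := by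
  classical
  have hterm : ∀ K ∈ {K : Sentence A | IsSentence K},
      G K * mulQ (MQ I) (MQ S) (K, List.range' 1 K.length) =
        (quasiShuffle I S).count K • G K := by
    intro K hK
    rw [mulQ_MQ_MQ, splitCount_eq_count_quasiShuffle hI hS hK, nsmul_eq_mul, mul_comm]
  rw [pairNQ, finsum_mem_congr rfl hterm, Finset.sum_list_map_count]
  have hsupport : {K : Sentence A | IsSentence K} ∩
      Function.support (fun K => (quasiShuffle I S).count K • G K) ⊆
        (quasiShuffle I S).toFinset := by
    rintro K ⟨-, hK⟩
    have hcount : (quasiShuffle I S).count K ≠ 0 := fun h => hK (by simp [h])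
    simpa using List.count_pos_iff.1 (Nat.pos_of_ne_zero hcount)
  convert finsum_mem_eq_sum_of_subset _ hsupport fun K hK =>
    isSentence_of_mem_quasiShuffle hI hS K (by simpa using hK)

section Ribbons

theorem finsum_mem_smul_Hd {X : Set (Sentence A)} {c : Sentence A → ℚ}
    (hfin : (X ∩ Function.support c).Finite) : ∑ᶠ J ∈ X, c J • Hd J = X.indicator c := by
  have hsupport : (X ∩ Function.support fun J => c J • Hd J).Finite :=
    hfin.subset fun J hJ => ⟨hJ.1, fun hcJ => hJ.2 (by simp [hcJ])⟩
  ext K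
  rw [finsum_mem_eq_sum _ hsupport, Finset.sum_apply]
  simp only [Pi.smul_apply, Hd, smul_eq_mul, mul_ite, mul_one, mul_zero, Finset.sum_ite_eq]
  by_cases hK : K ∈ X <;> by_cases hcK : c K = 0 <;> simp [hK, hcK, Hd, funext_iff]

theorem Rib_eq_indicator (I : Sentence A) :
    Rib I = {J | Refines I J}.indicator fun J => (-1) ^ (I.length - J.length) :=
  finsum_mem_smul_Hd ((finite_setOf_refines I).inter_of_left _)

theorem Rib_nil : Rib ([] : Sentence A) = Hd [] := by
  simp [Rib, refines_nil_iff]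

theorem Rib_singleton (q : List A) : Rib [q] = Hd [q] := by
  simp [Rib, refines_singleton_iff]

theorem mulN_Hd_singleton (q : List A) (f : NSymA A) :
    mulN (Hd [q]) f = Function.extend (q :: ·) f 0 := by
  ext K
  cases K with
  | nil => simp [mulN, Hd, Function.extend_apply']
  | cons x K =>
    have hterm : ∀ j ∈ Finset.range ((x :: K).length + 1), j ≠ 1 →
        Hd [q] ((x :: K).take j) * f ((x :: K).drop j) = 0 := by
      intro j hj hj1
      have hne : (x :: K).take j ≠ [q] := fun h => hj1 <| by
        have hlen := congrArg List.length h
        rw [List.length_take, min_eq_left (Finset.mem_range_succ_iff.1 hj)] at hlen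
        exact hlen
      rw [Hd, if_neg hne, zero_mul]
    rw [mulN, Finset.sum_eq_single 1 hterm (by simp)]
    by_cases hx : x = q
    · rw [hx, List.cons_injective.extend_apply]
      simp [Hd]
    · rw [Function.extend_apply' _ _ _ (by simp [Ne.symm hx])]
      simp [Hd, hx]

theorem mulN_Hd_nil (f : NSymA A) : mulN f (Hd []) = f := by
  ext K
  rw [mulN, Finset.sum_eq_single K.length]
  · simp [Hd]
  · intro j hj hne
    have hlt : j < K.length := lt_of_le_of_ne (Finset.mem_range_succ_iff.1 hj) hne
    rw [Hd, if_neg (by simpa using hlt), mul_zero]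
  · simp

theorem mulN_smul (f g : NSymA A) (c : ℚ) : mulN f (c • g) = c • mulN f g := by
  ext K
  simp only [mulN, Pi.smul_apply, smul_eq_mul, Finset.mul_sum, mul_left_comm]

theorem mulN_zero (f : NSymA A) : mulN f 0 = 0 := by
  ext K
  simp [mulN]

theorem mulN_Hd_singleton_indicator (q : List A) (X : Set (Sentence A)) (c : Sentence A → ℚ) :
    mulN (Hd [q]) (X.indicator fun K => c (q :: K)) = ((q :: ·) '' X).indicator c := by
  classical
  rw [mulN_Hd_singleton]
  ext K
  by_cases hK : ∃ K', q :: K' = K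
  · obtain ⟨K', rfl⟩ := hK
    simp [Set.indicator_apply]
  · rw [Function.extend_apply' _ _ _ hK,
      Set.indicator_of_notMem fun hK' => hK (hK'.imp fun _ => And.right)]
    rfl

theorem Rib_cons_cons (q : List A) {q' : List A} (hq' : q' ≠ []) (Q : Sentence A) :
    Rib (q :: q' :: Q) = mulN (Hd [q]) (Rib (q' :: Q)) - Rib ((q ++ q') :: Q) := by
  have hkeep : ((q :: ·) '' {S | Refines (q' :: Q) S}).indicator
      (fun K => (-1) ^ ((q :: q' :: Q).length - K.length)) = mulN (Hd [q]) (Rib (q' :: Q)) := by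
    simp [← mulN_Hd_singleton_indicator, Rib_eq_indicator]
  have hmerge : {S | Refines ((q ++ q') :: Q) S}.indicator
      (fun K => (-1) ^ ((q :: q' :: Q).length - K.length)) = -Rib ((q ++ q') :: Q) := by
    rw [Rib_eq_indicator, ← Set.indicator_neg']
    refine Set.indicator_congr fun K hK => ?_
    have hlen : K.length ≤ Q.length + 1 := Refines.length_le hK
    simp only [Pi.neg_apply, List.length_cons, Nat.succ_sub hlen, pow_succ, mul_neg_one]
  rw [Rib_eq_indicator, setOf_refines_cons_cons, Set.indicator_union_of_disjoint
    (disjoint_image_cons_setOf_refines q hq' Q _), sub_eq_add_neg, ← hkeep, ← hmerge]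
  rfl

end Ribbons

section Elementary

/-- The colored elementary function `E_u`, the ribbon function of the sentence of single letters of
`u` (see `Rib_map_singleton`): the sum of `(-1)^(|u| - ℓ(K)) H_K` over all sentences `K` with
maximal word `u`. -/
noncomputable def elementary (u : List A) : NSymA A :=
  {K | IsSentence K ∧ K.flatten = u}.indicator sentenceSign

theorem Rib_map_singleton (u : List A) : Rib (u.map fun a => [a]) = elementary u := by
  simp only [Rib_eq_indicator, elementary, refines_map_singleton_iff, List.length_map]
  refine Set.indicator_congr ?_
  rintro K ⟨hK, rfl⟩
  exact hK.sentenceSign_eq_pow_sub.symm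

/-- The word `w` with sign `(-1)^(|w| - 1)` in the free associative algebra: multiplying these over
the words of a sentence `K` gives the coefficient of `H_K` in the elementary function of the maximal
word of `K`. -/
noncomputable def signedWord (w : List A) : MonoidAlgebra ℚ (FreeMonoid A) :=
  MonoidAlgebra.single (FreeMonoid.ofList w) (wordSign w)

theorem signedWord_append (p s : List A) :
    signedWord (p ++ s) = -(signedWord p * signedWord s) := by
  simp [signedWord, MonoidAlgebra.single_mul_single, wordSign_append]

theorem prod_map_signedWord (K : Sentence A) :
    (K.map signedWord).prod =
      MonoidAlgebra.single (FreeMonoid.ofList K.flatten) (sentenceSign K) := by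
  induction K with
  | nil => rfl
  | cons w K ih =>
    rw [List.map_cons, List.prod_cons, ih, signedWord, MonoidAlgebra.single_mul_single]
    rfl

theorem elementary_apply {K : Sentence A} (hK : IsSentence K) (u : List A) :
    elementary u K = ((K.map signedWord).prod).coeff (FreeMonoid.ofList u) := by
  classical
  rw [prod_map_signedWord, MonoidAlgebra.coeff_single, Finsupp.single_apply, elementary,
    Set.indicator_apply]
  exact if_congr (and_iff_right hK) rfl rfl

open scoped Classical in
theorem sum_map_elementary_quasiShuffle {I S : Sentence A} (hI : IsSentence I)
    (hS : IsSentence S) (u : List A) :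
    ((quasiShuffle I S).map (elementary u)).sum =
      if S.flatten ++ I.flatten = u then sentenceSign S * sentenceSign I else 0 := by
  have hcoeff (L : List (Sentence A)) :
      (L.map fun K : Sentence A => ((K.map signedWord).prod).coeff (FreeMonoid.ofList u)).sum =
        (L.map fun K : Sentence A => (K.map signedWord).prod).sum.coeff (FreeMonoid.ofList u) := by
    induction L with
    | nil => simp
    | cons K L ih => simp [ih]
  rw [List.map_congr_left fun K hK =>
      elementary_apply (isSentence_of_mem_quasiShuffle hI hS K hK) u,
    hcoeff, sum_prod_quasiShuffle signedWord_append, prod_map_signedWord, prod_map_signedWord,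
    MonoidAlgebra.single_mul_single, MonoidAlgebra.coeff_single, Finsupp.single_apply]
  exact if_congr Iff.rfl rfl rfl

theorem rperp_MQ_elementary {S : Sentence A} (hS : IsSentence S) (u : List A) :
    rperp (MQ S) (elementary u) = {I | IsSentence I ∧ S.flatten ++ I.flatten = u}.indicator
      fun I => sentenceSign S * sentenceSign I := by
  classical
  have hfin : {I : Sentence A | IsSentence I ∧ S.flatten ++ I.flatten = u}.Finite := by
    refine (finite_setOf_refines ((u.drop S.flatten.length).map fun a => [a])).subset ?_
    rintro I ⟨hI, rfl⟩
    exact refines_map_singleton_iff.2 ⟨hI, by simp⟩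
  have hpair : ∀ I ∈ {I : Sentence A | IsSentence I},
      pairNQ (elementary u) (mulQ (MQ I) (MQ S)) • Hd I =
        (if S.flatten ++ I.flatten = u then sentenceSign S * sentenceSign I else 0) • Hd I := by
    intro I hI
    rw [pairNQ_mulQ_MQ_MQ _ hI hS, sum_map_elementary_quasiShuffle hI hS]
  rw [rperp, finsum_mem_congr rfl hpair, finsum_mem_smul_Hd]
  · ext I
    simp [Set.indicator_apply, ite_and]
  · exact hfin.subset fun I hI => ⟨hI.1, by_contra fun h => hI.2 (if_neg h)⟩

theorem rperp_MQ_elementary_append {S : Sentence A} (hS : IsSentence S) (r : List A) :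
    rperp (MQ S) (elementary (S.flatten ++ r)) = sentenceSign S • elementary r := by
  classical
  rw [rperp_MQ_elementary hS]
  ext I
  simp [elementary, Set.indicator_apply]

theorem rperp_MQ_elementary_eq_zero {S : Sentence A} (hS : IsSentence S) {u : List A}
    (hu : ¬ S.flatten <+: u) : rperp (MQ S) (elementary u) = 0 := by
  rw [rperp_MQ_elementary hS]
  exact funext fun I => Set.indicator_of_notMem (fun hI => hu ⟨I.flatten, hI.2⟩) _

theorem finsum_mem_refines_rperp_elementary_append {Q : Sentence A} (hQ : IsSentence Q)
    (r : List A) :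
    ∑ᶠ S ∈ {S | Refines Q S}, rperp (MQ S) (elementary (Q.flatten ++ r)) =
      (∑ᶠ S ∈ {S | Refines Q S}, sentenceSign S) • elementary r := by
  have hterm : ∀ S ∈ {S | Refines Q S}, rperp (MQ S) (elementary (Q.flatten ++ r)) =
      sentenceSign S • elementary r := by
    intro S hS
    rw [← hS.flatten_eq, rperp_MQ_elementary_append (hS.isSentence hQ)]
  rw [finsum_mem_congr rfl hterm]
  simp only [finsum_smul]

theorem finsum_mem_refines_rperp_elementary_eq_zero {Q : Sentence A} (hQ : IsSentence Q)
    {u : List A} (hu : ¬ Q.flatten <+: u) :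
    ∑ᶠ S ∈ {S | Refines Q S}, rperp (MQ S) (elementary u) = 0 :=
  finsum_mem_of_eqOn_zero fun S hS =>
    rperp_MQ_elementary_eq_zero (hS.isSentence hQ) (by rwa [hS.flatten_eq])

end Elementary

section Bernstein

/-- The summand of `𝔹_v(f)` indexed by the sentence `Q`. -/
noncomputable def bernsteinTerm (v : List A) (f : NSymA A) (Q : Sentence A) : NSymA A :=
  (-1 : ℚ) ^ Q.length • mulN (Hw (v ++ Q.reverse.flatten))
    (∑ᶠ S ∈ {S : Sentence A | Refines Q S}, rperp (MQ S) f)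

theorem bernsteinTerm_elementary_append {v : List A} (hv : v ≠ []) (q r : List A) :
    bernsteinTerm v (elementary (q ++ r)) (flattenWS [q]) =
      (-1 : ℚ) ^ q.length • mulN (Hd [v ++ q]) (elementary r) := by
  have hsum := finsum_mem_refines_rperp_elementary_append (isSentence_flattenWS [q]) r
  rw [flatten_flattenWS, List.flatten_singleton] at hsum
  rw [bernsteinTerm, hsum, mulN_smul, smul_smul]
  by_cases hq : q = []
  · simp [hq, hv, flattenWS, Hw, refines_nil_iff, sentenceSign]
  · simp [flattenWS, hq, hv, Hw, refines_singleton_iff, sentenceSign, wordSign, pow_succ]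

theorem exists_eq_flattenWS_of_bernsteinTerm_elementary_ne_zero {v u : List A} {Q : Sentence A}
    (hQ : IsSentence Q) (h : bernsteinTerm v (elementary u) Q ≠ 0) :
    ∃ q r, u = q ++ r ∧ Q = flattenWS [q] := by
  have hinner : ∑ᶠ S ∈ {S : Sentence A | Refines Q S}, rperp (MQ S) (elementary u) ≠ 0 :=
    fun h0 => h (by rw [bernsteinTerm, h0, mulN_zero, smul_zero])
  obtain ⟨r, rfl⟩ : Q.flatten <+: u := by
    by_contra hu
    exact hinner (finsum_mem_refines_rperp_elementary_eq_zero hQ hu)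
  match Q with
  | [] => exact ⟨[], r, rfl, rfl⟩
  | [q] => exact ⟨q, r, by simp, (flattenWS_cons_of_ne_nil (hQ q (by simp)) []).symm⟩
  | q :: q' :: Q =>
    have hsign : ∑ᶠ S ∈ {S | Refines (q :: q' :: Q) S}, sentenceSign S = 0 :=
      finsum_mem_refines_prod_eq_zero wordSign_append q (isSentence_cons.1 hQ).2
    rw [finsum_mem_refines_rperp_elementary_append hQ, hsign, zero_smul] at hinner
    exact absurd rfl hinner

theorem Bern_elementary_eq_sum {v : List A} (hv : v ≠ []) (u : List A) :
    Bern v (elementary u) = ∑ j ∈ Finset.range (u.length + 1),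
      (-1 : ℚ) ^ j • mulN (Hd [v ++ u.take j]) (elementary (u.drop j)) := by
  classical
  have hinj : Set.InjOn (fun j => flattenWS [u.take j]) (Finset.range (u.length + 1)) := by
    intro i hi j hj hij
    have hlen := congrArg (fun Q : Sentence A => Q.flatten.length) hij
    simp only [Finset.coe_range, Set.mem_Iio] at hi hj
    simp only [flatten_flattenWS, List.flatten_singleton, List.length_take] at hlen
    omega
  have hsupport : {Q : Sentence A | IsSentence Q} ∩
      Function.support (bernsteinTerm v (elementary u)) ⊆
        (Finset.range (u.length + 1)).image fun j => flattenWS [u.take j] := by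
    rintro Q ⟨hQ, hQ0⟩
    obtain ⟨q, r, rfl, rfl⟩ := exists_eq_flattenWS_of_bernsteinTerm_elementary_ne_zero hQ hQ0
    rw [Finset.mem_coe, Finset.mem_image]
    exact ⟨q.length, by simp, by simp⟩
  have hBern : Bern v (elementary u) =
      ∑ᶠ Q ∈ {Q : Sentence A | IsSentence Q}, bernsteinTerm v (elementary u) Q := rfl
  rw [hBern, finsum_mem_eq_sum_of_subset _ hsupport, Finset.sum_image hinj]
  · refine Finset.sum_congr rfl fun j hj => ?_
    have hterm := bernsteinTerm_elementary_append hv (u.take j) (u.drop j)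
    rwa [List.take_append_drop, List.length_take,
      min_eq_left (Finset.mem_range_succ_iff.1 hj)] at hterm
  · intro Q hQ
    obtain ⟨j, -, rfl⟩ := Finset.mem_image.1 hQ
    exact isSentence_flattenWS _

theorem Rib_cons_map_singleton_eq_sum (v u : List A) :
    Rib (v :: u.map fun a => [a]) = ∑ j ∈ Finset.range (u.length + 1),
      (-1 : ℚ) ^ j • mulN (Hd [v ++ u.take j]) (elementary (u.drop j)) := by
  induction u generalizing v with
  | nil =>
    have hE : elementary ([] : List A) = Hd [] := by rw [← Rib_map_singleton, List.map_nil, Rib_nil]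
    simp [hE, Rib_singleton, mulN_Hd_nil]
  | cons a u ih =>
    have hE : Rib ([a] :: u.map fun a => [a]) = elementary (a :: u) := Rib_map_singleton (a :: u)
    rw [List.length_cons, Finset.sum_range_succ', List.map_cons,
      Rib_cons_cons v (List.cons_ne_nil a []), hE, ih, sub_eq_neg_add,
      ← Finset.sum_neg_distrib]
    simp [pow_succ]

theorem Bern_elementary {v : List A} (hv : v ≠ []) (u : List A) :
    Bern v (elementary u) = Rib (v :: u.map fun a => [a]) := by
  rw [Bern_elementary_eq_sum hv, Rib_cons_map_singleton_eq_sum]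

theorem ImmS_cons_map_singleton {v : List A} (hv : v ≠ []) (as : List A) :
    ImmS (v :: as.map fun a => [a]) = Rib (v :: as.map fun a => [a]) := by
  have htail : ImmS (as.map fun a => [a]) = elementary as := by
    cases as with
    | nil => rw [← Rib_map_singleton, List.map_nil, Rib_nil]; rfl
    | cons a as =>
      rw [← Rib_map_singleton]
      exact ImmS_cons_map_singleton (List.cons_ne_nil a []) as
  rw [← Bern_elementary hv, ← htail]
  rfl
termination_by as.length

theorem statement16_general {J : Sentence A} (hJ : IsSentence J)
    (htail : ∀ w ∈ J.tail, w.length = 1) : ImmS J = Rib J := by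
  cases J with
  | nil => exact Rib_nil.symm
  | cons v K =>
    obtain ⟨as, rfl⟩ : K ∈ Set.range (List.map fun a : A => [a]) := by
      rw [Set.range_list_map]
      exact fun w hw => (List.length_eq_one_iff.1 (htail w hw)).imp fun _ => Eq.symm
    exact ImmS_cons_map_singleton (isSentence_cons.1 hJ).1 as

end Bernstein

end

/-- For colors `a_1, …, a_k`, the colored immaculate function indexed by
the sentence of single-letter words satisfies
`𝔖_{(a_1,…,a_k)} = R_{(a_1,…,a_k)} = Σ_{(a_1,…,a_k) ⪯ J} (-1)^{k - ℓ(J)} H_J`. -/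
theorem statement16 {A : Type*} (as : List A) :
    (ImmS (as.map (fun a => [a])) = Rib (as.map (fun a => [a]))) ∧
    (ImmS (as.map (fun a => [a])) =
      ∑ᶠ J ∈ {J : Sentence A | Refines (as.map (fun a => [a])) J},
        ((-1 : ℚ)) ^ (as.length - J.length) • Hd J) := by
  have hRib : ImmS (as.map fun a => [a]) = Rib (as.map fun a => [a]) :=
    statement16_general (by simp [IsSentence]) fun w hw => by
      obtain ⟨a, -, rfl⟩ := List.mem_map.1 (List.mem_of_mem_tail hw)
      rfl
  exact ⟨hRib, by rw [hRib, Rib, List.length_map]⟩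

end ColoredImm
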